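/- arXiv:0902.4332 — 2 statements merged into one kernel-verified Lean document; each statement's English description precedes it below -/
import Mathlib

section
/- Let ℓ ≥ 3 be a prime, n ≥ 1 an integer, and Δ ∈ Z/ℓ^n a nonsquare element of even ℓ-adic valuation k (with Δ ≠ 0). Then the number of triples (x,y,z) ∈ (Z/ℓ^n)³ with xy = z² − Δ equals ℓ^{2n} + ℓ^{2n−1} − 2ℓ^{2n−k/2−1}. -/
/-! For `N ≠ 0`, multiplication by `x` on `ℤ/N` has a kernel of order `gcd(N, x)` and the multiples
of `gcd(N, x)` as its image, and `φ(N/d)` elements `x` have `gcd(N, x) = d`. Hence `x y = c` has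
`∑ φ(N/d) d` solutions, the sum being over the divisors `d` of `N` which divide `c`.

Take `N = ℓ ^ n` and sum over `c = z² - Δ` with `Δ = ℓ ^ k u`, `k = 2m`. If `i ≤ k`, then
`ℓ ^ i ∣ z² - Δ` says that `ℓ ^ ⌈i/2⌉ ∣ z`, which holds for `ℓ ^ (n - ⌈i/2⌉)` values of `z`. If
`k < i ≤ n`, it never holds: `z = ℓ ^ m w` would give `w² ≡ u` modulo `ℓ`, and by Newton's method
`u`, hence `Δ`, would be a square. So only the divisors `ℓ ^ i` with `i ≤ k` contribute, each with
the same weight `φ(ℓ ^ (n - i)) ℓ ^ i = ℓ ^ (n - 1) (ℓ - 1)`, and a geometric sum remains.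
-/

open Finset

section Multiplication

variable {N : ℕ}

lemma natCast_zmod_dvd_natCast_iff {d a : ℕ} (hd : d ∣ N) :
    (d : ZMod N) ∣ (a : ZMod N) ↔ d ∣ a := by
  refine ⟨fun h ↦ ?_, Nat.cast_dvd_cast⟩
  have h_mod : (d : ZMod d) ∣ (a : ZMod d) := by
    simpa using map_dvd (ZMod.castHom hd (ZMod d)) h
  rwa [ZMod.natCast_self, zero_dvd_iff, ZMod.natCast_eq_zero_iff] at h_mod

variable [NeZero N]

lemma zmod_dvd_iff_gcd_val_dvd (x c : ZMod N) : x ∣ c ↔ ((N.gcd x.val : ℕ) : ZMod N) ∣ c := by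
  have x_dvd_gcd : x ∣ ((N.gcd x.val : ℕ) : ZMod N) :=
    ⟨x⁻¹, by rw [ZMod.mul_inv_eq_gcd, Nat.gcd_comm]⟩
  have gcd_dvd_x : ((N.gcd x.val : ℕ) : ZMod N) ∣ x := by
    simpa using (natCast_zmod_dvd_natCast_iff (Nat.gcd_dvd_left N x.val)).2 (Nat.gcd_dvd_right _ _)
  exact ⟨gcd_dvd_x.trans, x_dvd_gcd.trans⟩

lemma card_filter_natCast_dvd_zmod {d : ℕ} (hd : d ∣ N) :
    #{z : ZMod N | (d : ZMod N) ∣ z} = N / d := by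
  have h := IsAddCyclic.card_nsmulAddMonoidHom_range (ZMod N) d
  rw [Nat.card_zmod, Nat.gcd_eq_right hd] at h
  rw [← h, ← Fintype.card_subtype, ← Nat.card_eq_fintype_card]
  exact Nat.card_congr (Equiv.subtypeEquivRight fun z ↦ by
    simp [AddMonoidHom.mem_range, dvd_def, eq_comm])

lemma card_filter_zmod_mul_eq_zero (x : ZMod N) : #{y | x * y = 0} = N.gcd x.val := by
  have h := IsAddCyclic.card_nsmulAddMonoidHom_ker (ZMod N) x.val
  rw [Nat.card_zmod] at h
  rw [← h, ← Fintype.card_subtype, ← Nat.card_eq_fintype_card]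
  exact Nat.card_congr (Equiv.subtypeEquivRight fun y ↦ by simp [AddMonoidHom.mem_ker])

lemma card_filter_zmod_mul_eq (x c : ZMod N) :
    #{y | x * y = c} = if x ∣ c then N.gcd x.val else 0 := by
  split_ifs with hxc
  · have hc : c ∈ Set.range (AddMonoidHom.mulLeft x) := hxc.imp fun y hy ↦ hy.symm
    rw [← card_filter_zmod_mul_eq_zero]
    exact AddMonoidHom.card_fiber_eq_of_mem_range (AddMonoidHom.mulLeft x) hc ⟨0, mul_zero x⟩
  · rw [card_eq_zero, filter_eq_empty_iff]
    rintro y - rfl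
    exact hxc (dvd_mul_right x y)

lemma card_filter_gcd_val_eq {d : ℕ} (hd : d ∣ N) :
    #{x : ZMod N | N.gcd x.val = d} = (N / d).totient := by
  rw [Nat.totient_div_of_dvd hd]
  refine card_nbij' ZMod.val (↑) ?_ ?_ ?_ ?_
  · intro x hx
    simpa [ZMod.val_lt] using hx
  · intro a ha
    simp only [coe_filter, mem_range, Set.mem_ofPred_eq] at ha
    simpa [ZMod.val_natCast_of_lt ha.1] using ha.2
  · intro x _
    exact ZMod.natCast_zmod_val x
  · intro a ha
    simp only [coe_filter, mem_range, Set.mem_ofPred_eq] at ha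
    exact ZMod.val_natCast_of_lt ha.1

theorem card_filter_zmod_prod_mul_eq (c : ZMod N) :
    #{p : ZMod N × ZMod N | p.1 * p.2 = c} =
      ∑ d ∈ N.divisors, if (d : ZMod N) ∣ c then (N / d).totient * d else 0 := by
  have maps_to : ∀ x ∈ (univ : Finset (ZMod N)), N.gcd x.val ∈ N.divisors := fun x _ ↦
    Nat.mem_divisors.2 ⟨Nat.gcd_dvd_left _ _, NeZero.ne N⟩
  calc #{p : ZMod N × ZMod N | p.1 * p.2 = c}
      = ∑ x : ZMod N, #{y | x * y = c} := by
        simp only [card_filter, Fintype.sum_prod_type]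
    _ = ∑ x : ZMod N, if ((N.gcd x.val : ℕ) : ZMod N) ∣ c then N.gcd x.val else 0 := by
        refine sum_congr rfl fun x _ ↦ ?_
        simp only [card_filter_zmod_mul_eq, ← zmod_dvd_iff_gcd_val_dvd]
    _ = ∑ d ∈ N.divisors, ∑ x : ZMod N with N.gcd x.val = d,
          if (d : ZMod N) ∣ c then d else 0 :=
        (sum_fiberwise_of_maps_to' maps_to fun d ↦ if (d : ZMod N) ∣ c then d else 0).symm
    _ = _ := by
        refine sum_congr rfl fun d hd ↦ ?_
        rw [sum_const, card_filter_gcd_val_eq (Nat.dvd_of_mem_divisors hd), smul_eq_mul, mul_ite,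
          mul_zero]

theorem card_filter_zmod_prod_mul_eq_comp {α : Type*} [Fintype α] (f : α → ZMod N) :
    #{p : ZMod N × ZMod N × α | p.1 * p.2.1 = f p.2.2} =
      ∑ d ∈ N.divisors, (N / d).totient * d * #{a | (d : ZMod N) ∣ f a} := by
  calc #{p : ZMod N × ZMod N × α | p.1 * p.2.1 = f p.2.2}
      = ∑ a, #{p : ZMod N × ZMod N | p.1 * p.2 = f a} := by
        simp only [card_filter, Fintype.sum_prod_type]
        rw [sum_comm_cycle]
    _ = ∑ d ∈ N.divisors, ∑ a, if (d : ZMod N) ∣ f a then (N / d).totient * d else 0 := by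
        simp only [card_filter_zmod_prod_mul_eq]
        rw [sum_comm]
    _ = _ := by
        simp only [card_filter, mul_sum, mul_ite, mul_one, mul_zero]

end Multiplication

section PrimePower

lemma natCast_zmod_pow_dvd_natCast_iff {p n i a : ℕ} (hi : i ≤ n) :
    (p : ZMod (p ^ n)) ^ i ∣ (a : ZMod (p ^ n)) ↔ p ^ i ∣ a := by
  rw [← Nat.cast_pow, natCast_zmod_dvd_natCast_iff (pow_dvd_pow p hi)]

lemma zmod_pow_succ_dvd_pow_mul_iff {p n : ℕ} [NeZero p] {i : ℕ} (hi : i < n)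
    (a : ZMod (p ^ n)) :
    (p : ZMod (p ^ n)) ^ (i + 1) ∣ (p : ZMod (p ^ n)) ^ i * a ↔ (p : ZMod (p ^ n)) ∣ a := by
  obtain ⟨a, rfl⟩ := ZMod.natCast_zmod_surjective a
  have dvd_iff := natCast_zmod_pow_dvd_natCast_iff (p := p) (n := n) (i := 1) (a := a) (by omega)
  rw [pow_one, pow_one] at dvd_iff
  rw [← Nat.cast_pow p i, ← Nat.cast_mul, natCast_zmod_pow_dvd_natCast_iff hi, dvd_iff, pow_succ,
    Nat.mul_dvd_mul_iff_left (pow_pos (NeZero.pos p) i)]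

lemma prime_pow_dvd_pow_iff_pow_ceilDiv_dvd {M : Type*} [CommMonoidWithZero M] [IsCancelMulZero M]
    {p : M} (hp : Prime p) {i r : ℕ} (hr : 0 < r) (a : M) : p ^ i ∣ a ^ r ↔ p ^ (i ⌈/⌉ r) ∣ a := by
  rw [pow_dvd_iff_le_emultiplicity, pow_dvd_iff_le_emultiplicity, emultiplicity_pow hp]
  cases emultiplicity p a with
  | top => simp [hr.ne']
  | coe m => exact_mod_cast (ceilDiv_le_iff_le_mul hr).symm

variable {p n : ℕ} [Fact p.Prime]

theorem card_filter_zmod_prime_pow_prod_mul_eq_comp {α : Type*} [Fintype α]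
    {f : α → ZMod (p ^ n)} (hf : ∀ a, f a ≠ 0) :
    #{q : ZMod (p ^ n) × ZMod (p ^ n) × α | q.1 * q.2.1 = f q.2.2} =
      p ^ (n - 1) * (p - 1) * ∑ i ∈ range n, #{a | (p : ZMod (p ^ n)) ^ i ∣ f a} := by
  have hp : p.Prime := Fact.out
  have pow_eq_zero : (p : ZMod (p ^ n)) ^ n = 0 := mod_cast ZMod.natCast_self (p ^ n)
  rw [card_filter_zmod_prod_mul_eq_comp, Nat.sum_divisors_prime_pow hp, sum_range_succ, mul_sum]
  simp only [Nat.cast_pow, pow_eq_zero, zero_dvd_iff, hf, filter_false, card_empty, mul_zero,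
    add_zero]
  refine sum_congr rfl fun i hi ↦ ?_
  have hin : i < n := mem_range.1 hi
  have totient_mul : (p ^ n / p ^ i).totient * p ^ i = p ^ (n - 1) * (p - 1) := by
    rw [Nat.pow_div hin.le hp.pos, Nat.totient_prime_pow hp (Nat.sub_pos_of_lt hin),
      mul_right_comm, ← pow_add, show n - i - 1 + i = n - 1 by omega]
  rw [totient_mul]

lemma zmod_prime_pow_dvd_pow_iff_pow_ceilDiv_dvd {i r : ℕ} (hi : i ≤ n) (hr : 0 < r)
    (z : ZMod (p ^ n)) :
    (p : ZMod (p ^ n)) ^ i ∣ z ^ r ↔ (p : ZMod (p ^ n)) ^ (i ⌈/⌉ r) ∣ z := by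
  have hir : i ⌈/⌉ r ≤ n := (ceilDiv_le_iff_le_mul hr).2 (hi.trans (Nat.le_mul_of_pos_left n hr))
  obtain ⟨a, rfl⟩ := ZMod.natCast_zmod_surjective z
  rw [← Nat.cast_pow a, natCast_zmod_pow_dvd_natCast_iff hi, natCast_zmod_pow_dvd_natCast_iff hir]
  exact prime_pow_dvd_pow_iff_pow_ceilDiv_dvd (Fact.out : p.Prime).prime hr a

lemma padicValNat_val_lt {a : ZMod (p ^ n)} (ha : a ≠ 0) : padicValNat p a.val < n := by
  have hval : a.val ≠ 0 := (ZMod.val_ne_zero a).2 ha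
  have hle : p ^ padicValNat p a.val ≤ a.val := Nat.le_of_dvd (Nat.pos_of_ne_zero hval)
    pow_padicValNat_dvd
  exact (Nat.pow_lt_pow_iff_right (Fact.out : p.Prime).one_lt).1 (hle.trans_lt (ZMod.val_lt a))

lemma exists_isUnit_eq_pow_padicValNat_val_mul {a : ZMod (p ^ n)} (ha : a ≠ 0) :
    ∃ u, IsUnit u ∧ a = (p : ZMod (p ^ n)) ^ padicValNat p a.val * u := by
  have hval : a.val ≠ 0 := (ZMod.val_ne_zero a).2 ha
  have hn : 0 < n := (Nat.zero_le _).trans_lt (padicValNat_val_lt ha)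
  obtain ⟨u, hu⟩ : p ^ padicValNat p a.val ∣ a.val := pow_padicValNat_dvd
  refine ⟨u, (ZMod.isUnit_natCast_iff_not_dvd_pow Fact.out hn).2 fun hpu ↦ ?_, ?_⟩
  · apply pow_succ_padicValNat_not_dvd (p := p) hval
    rw [pow_succ]
    exact (mul_dvd_mul_left _ hpu).trans hu.symm.dvd
  · rw [← Nat.cast_pow, ← Nat.cast_mul, ← hu, ZMod.natCast_zmod_val]

end PrimePower

section Square

lemma sub_one_mul_sum_pow_sub_ceilDiv_two {R : Type*} [CommRing R] (q : R) {m n : ℕ}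
    (hm : m ≤ n) :
    (q - 1) * ∑ i ∈ range (2 * m + 1), q ^ (n - i ⌈/⌉ 2) =
      q ^ (n + 1) + q ^ n - 2 * q ^ (n - m) := by
  induction m with
  | zero =>
    rw [mul_zero, zero_add, sum_range_one, zero_ceilDiv, Nat.sub_zero]
    ring
  | succ m ih =>
    obtain ⟨r, rfl⟩ := Nat.exists_eq_add_of_le hm
    have ceilDiv_odd : (2 * m + 1) ⌈/⌉ 2 = m + 1 := by rw [Nat.ceilDiv_eq_add_pred_div]; omega
    have ceilDiv_even : (2 * m + 2) ⌈/⌉ 2 = m + 1 := by rw [Nat.ceilDiv_eq_add_pred_div]; omega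
    rw [show 2 * (m + 1) + 1 = 2 * m + 1 + 1 + 1 by ring, sum_range_succ, sum_range_succ,
      mul_add, mul_add, ih (by omega), ceilDiv_odd, ceilDiv_even, Nat.add_sub_cancel_left,
      show m + 1 + r - m = r + 1 by omega]
    ring

open Polynomial in
lemma isSquare_of_isNilpotent_sq_sub {R : Type*} [CommRing R] {u w : R} (h2 : IsUnit (2 : R))
    (hu : IsUnit u) (hw : IsNilpotent (w ^ 2 - u)) : IsSquare u := by
  have hw_unit : IsUnit w := by
    have : IsUnit (u + (w ^ 2 - u)) := hw.isUnit_add_left_of_commute hu (Commute.all _ _)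
    rwa [add_sub_cancel, isUnit_pow_iff two_ne_zero] at this
  have h_root : IsNilpotent (aeval w (X ^ 2 - C u)) := by simpa using hw
  have h_deriv : IsUnit (aeval w (derivative (X ^ 2 - C u))) := by
    simpa [one_add_one_eq_two] using h2.mul hw_unit
  obtain ⟨r, ⟨-, hr⟩, -⟩ := existsUnique_nilpotent_sub_and_aeval_eq_zero h_root h_deriv
  refine ⟨r, ?_⟩
  simpa [sub_eq_zero, sq, eq_comm] using hr

variable {p n m : ℕ} [Fact p.Prime] {u : ZMod (p ^ n)}

lemma isSquare_of_prime_pow_dvd_sq_sub (hp : p ≠ 2) (hm : 2 * m < n) (hu : IsUnit u)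
    {z : ZMod (p ^ n)}
    (hz : (p : ZMod (p ^ n)) ^ (2 * m + 1) ∣ z ^ 2 - (p : ZMod (p ^ n)) ^ (2 * m) * u) :
    IsSquare ((p : ZMod (p ^ n)) ^ (2 * m) * u) := by
  have isUnit_two : IsUnit (2 : ZMod (p ^ n)) := by
    refine ZMod.isUnit_prime_of_not_dvd Nat.prime_two fun h ↦ ?_
    exact hp ((Nat.prime_dvd_prime_iff_eq Nat.prime_two Fact.out).1
      (Nat.prime_two.dvd_of_dvd_pow h)).symm
  have isNilpotent_p : IsNilpotent (p : ZMod (p ^ n)) :=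
    ⟨n, mod_cast ZMod.natCast_self (p ^ n)⟩
  have pow_dvd_sq : (p : ZMod (p ^ n)) ^ (2 * m) ∣ z ^ 2 :=
    (dvd_sub_left (dvd_mul_right _ _)).1 ((pow_dvd_pow _ (Nat.le_succ _)).trans hz)
  obtain ⟨w, rfl⟩ : (p : ZMod (p ^ n)) ^ m ∣ z := by
    rwa [zmod_prime_pow_dvd_pow_iff_pow_ceilDiv_dvd hm.le two_pos, ← smul_eq_mul,
      smul_ceilDiv two_pos] at pow_dvd_sq
  rw [mul_pow, ← pow_mul', ← mul_sub, zmod_pow_succ_dvd_pow_mul_iff hm] at hz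
  have u_isSquare : IsSquare u := by
    obtain ⟨c, hc⟩ := hz
    refine isSquare_of_isNilpotent_sq_sub isUnit_two hu (w := w) ?_
    rw [hc]
    exact (Commute.all _ _).isNilpotent_mul_right isNilpotent_p
  exact ((even_two_mul m).isSquare_pow _).mul u_isSquare

lemma card_filter_prime_pow_dvd_sq_sub {i k : ℕ} (hik : i ≤ k) (hkn : k ≤ n) :
    #{z : ZMod (p ^ n) | (p : ZMod (p ^ n)) ^ i ∣ z ^ 2 - (p : ZMod (p ^ n)) ^ k * u} =
      p ^ (n - i ⌈/⌉ 2) := by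
  have hin : i ⌈/⌉ 2 ≤ n := (ceilDiv_le_iff_le_mul two_pos).2 (by omega)
  have hp_pos : 0 < p := (Fact.out : p.Prime).pos
  rw [← Nat.pow_div hin hp_pos, ← card_filter_natCast_dvd_zmod (pow_dvd_pow p hin)]
  congr 1 with z
  simp only [mem_filter_univ]
  rw [dvd_sub_left ((pow_dvd_pow _ hik).mul_right u),
    zmod_prime_pow_dvd_pow_iff_pow_ceilDiv_dvd (hik.trans hkn) two_pos, Nat.cast_pow]

lemma sum_card_filter_prime_pow_dvd_sq_sub (hp : p ≠ 2) (hm : 2 * m < n) (hu : IsUnit u)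
    (hns : ¬ IsSquare ((p : ZMod (p ^ n)) ^ (2 * m) * u)) :
    ∑ i ∈ range n,
        #{z : ZMod (p ^ n) | (p : ZMod (p ^ n)) ^ i ∣ z ^ 2 - (p : ZMod (p ^ n)) ^ (2 * m) * u} =
      ∑ i ∈ range (2 * m + 1), p ^ (n - i ⌈/⌉ 2) := by
  have card_filter_eq_zero : ∀ i ∈ range n, i ∉ range (2 * m + 1) →
      #{z : ZMod (p ^ n) |
        (p : ZMod (p ^ n)) ^ i ∣ z ^ 2 - (p : ZMod (p ^ n)) ^ (2 * m) * u} = 0 := by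
    intro i _ hi
    rw [card_eq_zero, filter_eq_empty_iff]
    intro z _ hz
    have hmi : 2 * m + 1 ≤ i := by simpa using hi
    exact hns (isSquare_of_prime_pow_dvd_sq_sub hp hm hu ((pow_dvd_pow _ hmi).trans hz))
  rw [← sum_subset (range_mono hm) card_filter_eq_zero]
  exact sum_congr rfl fun i hi ↦
    card_filter_prime_pow_dvd_sq_sub (Nat.le_of_lt_succ (mem_range.1 hi)) hm.le

theorem card_filter_zmod_prime_pow_prod_mul_eq_sq_sub (hp : p ≠ 2) (hm : 2 * m < n)
    (hu : IsUnit u) (hns : ¬ IsSquare ((p : ZMod (p ^ n)) ^ (2 * m) * u)) :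
    (#{q : ZMod (p ^ n) × ZMod (p ^ n) × ZMod (p ^ n) |
        q.1 * q.2.1 = q.2.2 ^ 2 - (p : ZMod (p ^ n)) ^ (2 * m) * u} : ℤ) =
      p ^ (2 * n) + p ^ (2 * n - 1) - 2 * p ^ (2 * n - m - 1) := by
  have sq_sub_ne_zero : ∀ z, z ^ 2 - (p : ZMod (p ^ n)) ^ (2 * m) * u ≠ 0 := fun z hz ↦
    hns ⟨z, by rw [← sq, sub_eq_zero.1 hz]⟩
  rw [card_filter_zmod_prime_pow_prod_mul_eq_comp sq_sub_ne_zero,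
    sum_card_filter_prime_pow_dvd_sq_sub hp hm hu hns]
  push_cast [Nat.cast_sub (Fact.out : p.Prime).one_le]
  calc (p : ℤ) ^ (n - 1) * (p - 1) * ∑ i ∈ range (2 * m + 1), (p : ℤ) ^ (n - i ⌈/⌉ 2)
      = p ^ (n - 1) * (p ^ (n + 1) + p ^ n - 2 * p ^ (n - m)) := by
        rw [mul_assoc, sub_one_mul_sum_pow_sub_ceilDiv_two _ (by omega)]
    _ = p ^ (n - 1 + (n + 1)) + p ^ (n - 1 + n) - 2 * p ^ (n - 1 + (n - m)) := by ring
    _ = p ^ (2 * n) + p ^ (2 * n - 1) - 2 * p ^ (2 * n - m - 1) := by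
        congr 3 <;> omega

end Square

/-- Number of solutions of `x y = z² - Δ` over `Z/ℓ^n` when `Δ` is a nonsquare of even
valuation `k`. -/
theorem stmt5 (ℓ : ℕ) (hℓ : ℓ.Prime) (h3 : 3 ≤ ℓ) (n : ℕ) (hn : 1 ≤ n)
    (Δ : ZMod (ℓ ^ n)) (hΔ : Δ ≠ 0) (hns : ¬ IsSquare Δ)
    (k : ℕ) (hk : k = padicValNat ℓ Δ.val) (heven : Even k) :
    (Nat.card {p : ZMod (ℓ ^ n) × ZMod (ℓ ^ n) × ZMod (ℓ ^ n) //
        p.1 * p.2.1 = p.2.2 ^ 2 - Δ} : ℤ) =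
      ℓ ^ (2 * n) + ℓ ^ (2 * n - 1) - 2 * ℓ ^ (2 * n - k / 2 - 1) := by
  have : Fact ℓ.Prime := ⟨hℓ⟩
  obtain ⟨m, rfl⟩ := even_iff_exists_two_mul.1 heven
  have hmn : 2 * m < n := hk ▸ padicValNat_val_lt hΔ
  obtain ⟨u, hu, hΔu⟩ := exists_isUnit_eq_pow_padicValNat_val_mul hΔ
  rw [← hk] at hΔu
  subst hΔu
  rw [Nat.card_eq_fintype_card, Fintype.card_subtype,
    card_filter_zmod_prime_pow_prod_mul_eq_sq_sub (by omega) hmn hu hns,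
    Nat.mul_div_cancel_left m two_pos]
end

section
/- Let p ≥ 5 be a prime and let c_{A,B} ∈ F_p[A,B] be the coefficient of x^{p−1} in (x³ + Ax + B)^{(p−1)/2}. Then c_{A,B} is squarefree as a polynomial over the algebraic closure of F_p. -/
/-!
Regard the coefficient `c` of `x ^ (p - 1)` in `F ^ ((p - 1) / 2)`, `F = x³ + Ax + B`, as a period
of the family `y² = F`: taking the coefficient of `x ^ (p - 1)` kills derivatives in characteristic
`p`, just as integrating over a cycle does, so `c` satisfies the Picard–Fuchs equations of the
family, both in the direction of `A` and in that of `B`. These are linear of order two with leading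
coefficient `4(4A³ + 27B²)`. If a prime `q` divides `c` at least twice, comparing the orders of
vanishing along `q = 0` in such an equation shows that either `q` divides the leading coefficient,
or `q` divides both partial derivatives of `q`, which is impossible because `q` has degree less
than `p`. In the first case the cubic `F` acquires a double root at the generic point of `q = 0`,
but then `F = (x - r)² (x + 2r)` and `c = (3r) ^ ((p - 1) / 2)` there, with `r ≠ 0` because `q` does
not divide both `A` and `B`; so `c` does not vanish along `q = 0`.
-/

lemma natCast_ne_zero_of_lt (R : Type*) [AddMonoidWithOne R] {p k : ℕ} [CharP R p] (hk : 0 < k)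
    (hkp : k < p) : (k : R) ≠ 0 :=
  (CharP.cast_eq_zero_iff R p k).not.mpr (Nat.not_dvd_of_pos_of_lt hk hkp)

section Derivation

variable {k R : Type*} [CommRing k] [CommRing R] [Algebra k R] (D : Derivation k R R)

lemma dvd_derivation_pow_succ_mul (q g : R) (n : ℕ) : q ^ n ∣ D (q ^ (n + 1) * g) := by
  refine ⟨q * D g + g * (n + 1 : ℕ) * D q, ?_⟩
  simp only [Derivation.leibniz, Derivation.leibniz_pow, smul_eq_mul, nsmul_eq_mul,
    Nat.add_sub_cancel]
  ring

lemma exists_derivation_derivation_pow_mul (q g : R) (n : ℕ) :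
    ∃ r, D (D (q ^ (n + 2) * g)) =
      q ^ n * (((n + 2 : ℕ) : R) * (n + 1 : ℕ) * D q ^ 2 * g + q * r) := by
  refine ⟨(n + 2) * D (D q) * g + 2 * (n + 2) * D q * D g + q * D (D g), ?_⟩
  simp only [Derivation.leibniz, Derivation.leibniz_pow, Derivation.map_natCast, map_add,
    smul_eq_mul, nsmul_eq_mul, Nat.add_sub_cancel, show n + 2 - 1 = n + 1 from rfl]
  push_cast
  ring

lemma derivation_pow_succ (f : R) (n : ℕ) : D (f ^ (n + 1)) = (n + 1) * f ^ n * D f := by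
  rw [Derivation.leibniz_pow, Nat.add_sub_cancel, smul_eq_mul, nsmul_eq_mul, Nat.cast_succ,
    mul_assoc]

lemma derivation_derivation_pow_add_two {f : R} (hf : D (D f) = 0) (n : ℕ) :
    D (D (f ^ (n + 2))) = (n + 2) * (n + 1) * f ^ n * D f ^ 2 := by
  have hconst : D ((n : R) + 2) = 0 := by exact_mod_cast Derivation.map_natCast D (n + 2)
  rw [derivation_pow_succ, Derivation.leibniz, hf, Derivation.leibniz, derivation_pow_succ]
  push_cast
  rw [add_assoc, one_add_one_eq_two, hconst]
  simp only [smul_eq_mul]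
  ring

lemma dvd_or_dvd_derivation_of_ode [IsDomain R] {q f P Q S : R} (hq : Prime q)
    (hf : FiniteMultiplicity q f) (hmul : ∀ e ≤ multiplicity q f, 0 < e → ¬ q ∣ (e : R))
    (hsq : q * q ∣ f) (hode : P * D (D f) + Q * D f + S * f = 0) :
    q ∣ P ∨ q ∣ D q := by
  obtain ⟨g, hfg, hg⟩ := hf.exists_eq_pow_mul_and_not_dvd
  obtain ⟨n, hn⟩ := Nat.exists_eq_add_of_le' (hf.le_multiplicity_of_pow_dvd (sq q ▸ hsq))
  rw [hn] at hfg hmul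
  obtain ⟨r, hr⟩ := exists_derivation_derivation_pow_mul D q g n
  obtain ⟨s, hs⟩ := dvd_derivation_pow_succ_mul D q g (n + 1)
  have hcancel : P * (((n + 2 : ℕ) : R) * (n + 1 : ℕ) * D q ^ 2 * g + q * r)
      + Q * (q * s) + S * (q ^ 2 * g) = 0 := by
    refine (mul_eq_zero.mp ?_).resolve_left (pow_ne_zero n hq.ne_zero)
    rw [← hode, hfg, hr, hs]
    ring
  have hlead : q ∣ P * (((n + 2 : ℕ) : R) * (n + 1 : ℕ) * D q ^ 2 * g) :=
    ⟨-(P * r + Q * s + S * (q * g)), by linear_combination hcancel⟩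
  have h₁ := hmul (n + 1) (by lia) (by lia)
  have h₂ := hmul (n + 2) le_rfl (by lia)
  simpa only [hq.dvd_mul, hq.dvd_pow_iff_dvd two_ne_zero, h₁, h₂, hg, false_or, or_false]
    using hlead

end Derivation

section MvPolynomial

open MvPolynomial

variable {σ R : Type*} [CommRing R]

lemma degreeOf_pderiv_lt {i : σ} {q : MvPolynomial σ R} (h : pderiv i q ≠ 0) :
    degreeOf i (pderiv i q) < degreeOf i q := by
  have hlt : ∀ m ∈ (pderiv i q).support, m i < degreeOf i q := fun m hm ↦ by
    rw [mem_support_iff, coeff_pderiv] at hm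
    simpa using monomial_le_degreeOf i (mem_support_iff.mpr (left_ne_zero_of_mul hm))
  obtain ⟨m, hm⟩ := support_nonempty.mpr h
  exact (degreeOf_lt_iff (Nat.zero_lt_of_lt (hlt m hm))).mpr hlt

lemma pderiv_eq_zero_of_dvd_pderiv [NoZeroDivisors R] {i : σ} {q : MvPolynomial σ R}
    (h : q ∣ pderiv i q) : pderiv i q = 0 := by
  by_contra h₀
  have hlt := degreeOf_pderiv_lt h₀
  obtain ⟨r, hr⟩ := h
  rw [hr] at h₀ hlt
  rw [degreeOf_mul_eq (left_ne_zero_of_mul h₀) (right_ne_zero_of_mul h₀)] at hlt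
  lia

lemma degreeOf_eq_zero_of_pderiv_eq_zero [NoZeroDivisors R] (p : ℕ) [CharP R p] {i : σ}
    {q : MvPolynomial σ R} (hdeg : degreeOf i q < p) (h : pderiv i q = 0) :
    degreeOf i q = 0 := by
  refine Nat.le_zero.mp (degreeOf_le_iff.mpr fun m hm ↦ not_lt.mp fun hmi ↦ ?_)
  obtain ⟨m, rfl⟩ := exists_add_of_le (Finsupp.single_le_iff.mpr (Nat.succ_le_of_lt hmi))
  rw [add_comm, mem_support_iff] at hm
  have hcoeff : coeff (m + Finsupp.single i 1) q * ((m i + 1 : ℕ) : R) = 0 := by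
    rw [Nat.cast_succ, ← coeff_pderiv, h, coeff_zero]
  have hdvd : p ∣ m i + 1 :=
    (CharP.cast_eq_zero_iff R p _).mp ((mul_eq_zero.mp hcoeff).resolve_left hm)
  have hle : m i + 1 ≤ degreeOf i q := by
    simpa using monomial_le_degreeOf i (mem_support_iff.mpr hm)
  exact Nat.not_dvd_of_pos_of_lt (m i).succ_pos (hle.trans_lt hdeg) hdvd

lemma totalDegree_pow_of_isDomain [IsDomain R] {q : MvPolynomial σ R} (hq : q ≠ 0) (n : ℕ) :
    totalDegree (q ^ n) = n * totalDegree q := by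
  induction n with
  | zero => simp
  | succ n ih =>
    rw [pow_succ, totalDegree_mul_of_isDomain (pow_ne_zero n hq) hq, ih, Nat.succ_mul]

lemma totalDegree_coeff_pow_le {F : Polynomial (MvPolynomial σ R)} {d : ℕ}
    (hF : ∀ i, (F.coeff i).totalDegree ≤ d) (m i : ℕ) :
    ((F ^ m).coeff i).totalDegree ≤ m * d := by
  induction m generalizing i with
  | zero =>
    rw [pow_zero, Polynomial.coeff_one]
    split_ifs <;> simp
  | succ m ih =>
    rw [pow_succ, Polynomial.coeff_mul, Nat.succ_mul]
    exact totalDegree_finsetSum_le fun x _ ↦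
      (totalDegree_mul _ _).trans (add_le_add (ih x.1) (hF x.2))

variable {K : Type*} [Field K] {q : MvPolynomial σ K}

lemma isUnit_of_totalDegree_eq_zero (hq : q ≠ 0) (h : totalDegree q = 0) : IsUnit q := by
  have hC := totalDegree_eq_zero_iff_eq_C.mp h
  refine isUnit_iff_eq_C_of_isReduced.mpr ⟨_, isUnit_iff_ne_zero.mpr fun h₀ ↦ hq ?_, hC⟩
  rw [hC, h₀, C_0]

lemma isUnit_of_forall_dvd_pderiv (p : ℕ) [CharP K p] (hq : q ≠ 0) (hdeg : totalDegree q < p)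
    (h : ∀ i, q ∣ pderiv i q) : IsUnit q := by
  have hvars : q.vars = ∅ := Finset.eq_empty_of_forall_notMem fun i ↦ by
    rw [mem_vars_iff_degreeOf_ne_zero, not_not]
    exact degreeOf_eq_zero_of_pderiv_eq_zero p ((degreeOf_le_totalDegree q i).trans_lt hdeg)
      (pderiv_eq_zero_of_dvd_pderiv (h i))
  exact isUnit_of_totalDegree_eq_zero hq
    (totalDegree_eq_zero_iff_eq_C.mpr (vars_eq_empty_iff_eq_C.mp hvars))

lemma multiplicity_le_totalDegree (hq : Prime q) {f : MvPolynomial σ K} (hf : f ≠ 0) :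
    multiplicity q f ≤ totalDegree f := by
  have hdeg : totalDegree q ≠ 0 := fun h ↦
    hq.not_isUnit (isUnit_of_totalDegree_eq_zero hq.ne_zero h)
  calc multiplicity q f
      ≤ multiplicity q f * totalDegree q := Nat.le_mul_of_pos_right _ (Nat.pos_of_ne_zero hdeg)
    _ = totalDegree (q ^ multiplicity q f) := (totalDegree_pow_of_isDomain hq.ne_zero _).symm
    _ ≤ totalDegree f := totalDegree_le_of_dvd_of_isDomain (pow_multiplicity_dvd q f) hf

lemma not_dvd_natCast_of_lt (p : ℕ) [CharP K p] (hq : ¬ IsUnit q) {k : ℕ} (hk : 0 < k)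
    (hkp : k < p) : ¬ q ∣ (k : MvPolynomial σ K) := fun h ↦ by
  refine hq (isUnit_of_dvd_unit h ?_)
  rw [← map_natCast C]
  exact (isUnit_iff_ne_zero.mpr (natCast_ne_zero_of_lt K hk hkp)).map C

end MvPolynomial

section Coeffwise

open Polynomial

variable {k R : Type*} [CommRing k] [CommRing R] [Algebra k R] (D : Derivation k R R)

/-- The derivation of `R[X]` that applies a derivation `D` of `R` to every coefficient:
`Derivation.mapCoeffs` with values in `R[X]` instead of `PolynomialModule R R`. -/
noncomputable def coeffwise : Derivation k R[X] R[X] :=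
  (PolynomialModule.equivPolynomialSelf (R := R)).toLinearMap.compDer D.mapCoeffs

lemma coeff_coeffwise (f : R[X]) (i : ℕ) : (coeffwise D f).coeff i = D (f.coeff i) := rfl

lemma coeffwise_C (a : R) : coeffwise D (C a) = C (D a) := by
  ext i
  simp only [coeff_coeffwise, coeff_C, apply_ite D, map_zero]

lemma coeffwise_X : coeffwise D X = 0 := by
  ext i
  simp only [coeff_coeffwise, coeff_X, apply_ite D, map_zero, D.map_one_eq_zero, ite_self,
    coeff_zero]

lemma ode_coeff_of_eq_derivative {f g : R[X]} {P Q S : R} {i : ℕ} (hi : ((i + 1 : ℕ) : R) = 0)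
    (h : C P * coeffwise D (coeffwise D f) + C Q * coeffwise D f + C S * f = derivative g) :
    P * D (D (f.coeff i)) + Q * D (f.coeff i) + S * f.coeff i = 0 := by
  simp only [← coeff_coeffwise, ← coeff_C_mul, ← coeff_add]
  rw [h, coeff_derivative, ← Nat.cast_succ, hi, mul_zero]

end Coeffwise

section HasseInvariant

open Polynomial

variable {R : Type*} [CommRing R]

/-- The cubic `x³ + ax + b` of the short Weierstrass equation `y² = x³ + ax + b`. -/
noncomputable def weierstrassCubic (a b : R) : R[X] := X ^ 3 + C a * X + C b

/-- The Hasse invariant of the curve `y² = x³ + ax + b` in odd characteristic `p`, as the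
coefficient of `x ^ (p - 1)` in `(x³ + ax + b) ^ ((p - 1) / 2)`. -/
noncomputable def hasseInvariant (p : ℕ) (a b : R) : R :=
  (weierstrassCubic a b ^ ((p - 1) / 2)).coeff (p - 1)

lemma map_hasseInvariant {S : Type*} [CommRing S] (φ : R →+* S) (p : ℕ) (a b : R) :
    φ (hasseInvariant p a b) = hasseInvariant p (φ a) (φ b) := by
  simp only [hasseInvariant, weierstrassCubic, ← Polynomial.coeff_map, Polynomial.map_pow,
    Polynomial.map_add, Polynomial.map_mul, Polynomial.map_C, Polynomial.map_X]

lemma hasseInvariant_two_mul_add_five (n : ℕ) (a b : R) :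
    hasseInvariant (2 * n + 5) a b = (weierstrassCubic a b ^ (n + 2)).coeff (2 * n + 4) := by
  rw [hasseInvariant, show (2 * n + 5 - 1) / 2 = n + 2 by lia]
  rfl

lemma derivative_weierstrassCubic (a b : R) :
    derivative (weierstrassCubic a b) = 3 * X ^ 2 + C a := by
  rw [weierstrassCubic, derivative_add, derivative_add, derivative_X_pow, derivative_C_mul,
    derivative_X, derivative_C, mul_one, add_zero, map_natCast]
  rfl

lemma derivative_mul_weierstrassCubic_pow (g : R[X]) (a b : R) (n : ℕ) :
    derivative (g * weierstrassCubic a b ^ (n + 1)) = weierstrassCubic a b ^ n *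
      (derivative g * weierstrassCubic a b + (n + 1 : R[X]) * g * (3 * X ^ 2 + C a)) := by
  rw [derivative_mul, derivative_pow_succ, derivative_weierstrassCubic, pow_succ, map_add,
    map_one, C_eq_natCast]
  ring

section PicardFuchs

variable {k : Type*} [CommRing k] [Algebra k R] (D : Derivation k R R) {a b : R}

lemma coeffwise_weierstrassCubic :
    coeffwise D (weierstrassCubic a b) = C (D a) * X + C (D b) := by
  simp [weierstrassCubic, Derivation.leibniz_pow, coeffwise_C, coeffwise_X, mul_comm X]

variable (n : ℕ) [CharP R (2 * n + 5)]

lemma two_mul_add_five_eq_zero : (2 * n + 5 : R[X]) = 0 := by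
  exact_mod_cast CharP.cast_eq_zero R[X] (2 * n + 5)

/- The polynomials `g` of which the next two proofs take derivatives come from Griffiths–Dwork
reduction: their coefficients solve the linear system expressing that the Picard–Fuchs combination
of `F ^ (n + 2)`, `F ^ (n + 1)` and `F ^ n` is exact when `2 * n + 5 = 0`. -/
lemma hasseInvariant_ode_left (ha : D a = 1) (hb : D b = 0) :
    4 * (4 * a ^ 3 + 27 * b ^ 2) * D (D (hasseInvariant (2 * n + 5) a b)) +
      48 * a ^ 2 * D (hasseInvariant (2 * n + 5) a b) + 7 * a * hasseInvariant (2 * n + 5) a b =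
      0 := by
  have hF : coeffwise D (weierstrassCubic a b) = X := by
    simp [coeffwise_weierstrassCubic, ha, hb]
  rw [hasseInvariant_two_mul_add_five]
  refine ode_coeff_of_eq_derivative D (g := -(14 * C a * X ^ 4 + 10 * C a ^ 2 * X ^ 2 +
    20 * C a * C b * X + 18 * C b ^ 2) * weierstrassCubic a b ^ (n + 1))
    (CharP.cast_eq_zero R (2 * n + 5)) ?_
  rw [derivation_derivation_pow_add_two _ (by rw [hF, coeffwise_X]), derivation_pow_succ, hF,
    derivative_mul_weierstrassCubic_pow]
  simp only [derivative_neg, derivative_mul, derivative_C, derivative_X, derivative_pow,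
    derivative_ofNat, map_add, map_mul, map_pow, map_ofNat, map_natCast,
    pow_succ (weierstrassCubic a b)]
  generalize weierstrassCubic a b ^ n = G
  rw [weierstrassCubic]
  push_cast
  linear_combination (G * ((4 * C a ^ 3 + 27 * C b ^ 2) * X ^ 2 * (2 * n + 1) +
    24 * C a ^ 2 * X * (X ^ 3 + C a * X + C b) + (7 * C a * X ^ 4 + 5 * C a ^ 2 * X ^ 2 +
      10 * C a * C b * X + 9 * C b ^ 2) * (3 * X ^ 2 + C a))) * two_mul_add_five_eq_zero (R := R) n

lemma hasseInvariant_ode_right (ha : D a = 0) (hb : D b = 1) :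
    4 * (4 * a ^ 3 + 27 * b ^ 2) * D (D (hasseInvariant (2 * n + 5) a b)) +
      216 * b * D (hasseInvariant (2 * n + 5) a b) + 15 * hasseInvariant (2 * n + 5) a b = 0 := by
  have hF : coeffwise D (weierstrassCubic a b) = 1 := by
    simp [coeffwise_weierstrassCubic, ha, hb]
  rw [hasseInvariant_two_mul_add_five]
  refine ode_coeff_of_eq_derivative D (g := -(30 * X ^ 4 + 42 * C a * X ^ 2 + 12 * C b * X +
    8 * C a ^ 2) * weierstrassCubic a b ^ (n + 1)) (CharP.cast_eq_zero R (2 * n + 5)) ?_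
  rw [derivation_derivation_pow_add_two _ (by rw [hF, Derivation.map_one_eq_zero]),
    derivation_pow_succ, hF, derivative_mul_weierstrassCubic_pow]
  simp only [derivative_neg, derivative_mul, derivative_C, derivative_X, derivative_pow,
    derivative_ofNat, map_add, map_mul, map_pow, map_ofNat, map_natCast,
    pow_succ (weierstrassCubic a b)]
  generalize weierstrassCubic a b ^ n = G
  rw [weierstrassCubic]
  push_cast
  linear_combination (G * ((4 * C a ^ 3 + 27 * C b ^ 2) * (2 * n + 1) +
    108 * C b * (X ^ 3 + C a * X + C b) + (15 * X ^ 4 + 21 * C a * X ^ 2 + 6 * C b * X +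
      4 * C a ^ 2) * (3 * X ^ 2 + C a))) * two_mul_add_five_eq_zero (R := R) n

end PicardFuchs

section Singular

variable {p : ℕ} [CharP R p]

lemma taylor_coeff_pred_of_natDegree_lt (hp : p.Prime) {f : R[X]} (hf : f.natDegree < 2 * p - 1)
    (r : R) : (taylor r f).coeff (p - 1) = f.coeff (p - 1) := by
  have hp₁ := hp.one_lt
  have hhasse : hasseDeriv (p - 1) f = C (f.coeff (p - 1)) := by
    ext i
    rw [hasseDeriv_coeff, coeff_C]
    rcases eq_or_ne i 0 with rfl | hi
    · simp
    rw [if_neg hi]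
    rcases lt_or_ge i p with hip | hip
    · have hdvd : p ∣ (i + (p - 1)).choose (p - 1) :=
        hp.dvd_choose (by lia) (by lia) (by lia)
      rw [(CharP.cast_eq_zero_iff R p _).mpr hdvd, zero_mul]
    · rw [coeff_eq_zero_of_natDegree_lt (by lia), mul_zero]
  rw [taylor_coeff, hhasse, eval_C]

lemma weierstrassCubic_nodal (r : R) :
    weierstrassCubic (-3 * r ^ 2) (2 * r ^ 3) = (X - C r) ^ 2 * (X + C (2 * r)) := by
  simp only [weierstrassCubic, map_mul, map_neg, map_pow, map_ofNat]
  ring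

lemma hasseInvariant_nodal (hp : p.Prime) (hp2 : p ≠ 2) (r : R) :
    hasseInvariant p (-3 * r ^ 2) (2 * r ^ 3) = (3 * r) ^ ((p - 1) / 2) := by
  have hp₁ := hp.one_lt
  have hodd : 2 * ((p - 1) / 2) = p - 1 := by
    have := hp.eq_two_or_odd; lia
  have hdeg : (weierstrassCubic (-3 * r ^ 2) (2 * r ^ 3) ^ ((p - 1) / 2)).natDegree <
      2 * p - 1 := by
    have : (weierstrassCubic (-3 * r ^ 2) (2 * r ^ 3)).natDegree ≤ 3 := by
      unfold weierstrassCubic; compute_degree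
    exact (natDegree_pow_le_of_le _ this).trans_lt (by lia)
  rw [hasseInvariant, ← taylor_coeff_pred_of_natDegree_lt hp hdeg r, weierstrassCubic_nodal,
    mul_pow, ← pow_mul, hodd, taylor_mul, taylor_pow, map_sub, taylor_X, taylor_C,
    add_sub_cancel_right, coeff_X_pow_mul', if_pos le_rfl, Nat.sub_self, taylor_coeff_zero]
  simp only [eval_pow, eval_add, eval_X, eval_C]
  ring

lemma hasseInvariant_ne_zero_of_singular {K : Type*} [Field K] [CharP K p]
    (hp5 : 5 ≤ p) {a b : K} (hsing : 4 * a ^ 3 + 27 * b ^ 2 = 0) (ha : a ≠ 0) :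
    hasseInvariant p a b ≠ 0 := by
  have h2 : (2 : K) ≠ 0 := natCast_ne_zero_of_lt K (p := p) two_pos (by lia)
  have h3 : (3 : K) ≠ 0 := natCast_ne_zero_of_lt K (p := p) three_pos (by lia)
  have hb : b ≠ 0 := by
    rintro rfl
    refine mul_ne_zero (pow_ne_zero 2 h2) (pow_ne_zero 3 ha) ?_
    linear_combination hsing
  set r := -3 * b / (2 * a) with hr
  have har : a = -3 * r ^ 2 := by
    rw [hr]; field_simp; linear_combination hsing
  have hbr : b = 2 * r ^ 3 := by
    rw [hr]; field_simp; linear_combination hsing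
  have hr₀ : r ≠ 0 := div_ne_zero (mul_ne_zero (neg_ne_zero.mpr h3) hb) (mul_ne_zero h2 ha)
  rw [har, hbr, hasseInvariant_nodal (CharP.char_prime_of_ne_zero K (by lia)) (by lia)]
  exact pow_ne_zero _ (mul_ne_zero h3 hr₀)

end Singular

end HasseInvariant

section Generic

open MvPolynomial

lemma totalDegree_hasseInvariant_X_le (R : Type*) [CommRing R] [Nontrivial R] (p : ℕ) :
    totalDegree (hasseInvariant p (X 0) (X 1) : MvPolynomial (Fin 2) R) ≤ (p - 1) / 2 := by
  refine (totalDegree_coeff_pow_le (d := 1) (fun i ↦ ?_) _ _).trans_eq (mul_one _)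
  simp only [weierstrassCubic, Polynomial.coeff_add, Polynomial.coeff_X_pow,
    Polynomial.coeff_C_mul, Polynomial.coeff_X, Polynomial.coeff_C]
  refine (totalDegree_add _ _).trans (max_le ((totalDegree_add _ _).trans (max_le ?_ ?_)) ?_) <;>
    split_ifs <;> simp

lemma map_hasseInvariant_X {R S : Type*} [CommRing R] [CommRing S] (f : R →+* S) (p : ℕ) :
    map f (hasseInvariant p (X 0) (X 1) : MvPolynomial (Fin 2) R) =
      hasseInvariant p (X 0) (X 1) := by
  rw [map_hasseInvariant, map_X, map_X]

variable {K : Type*} [Field K] (p : ℕ) [CharP K p]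

lemma hasseInvariant_X_ne_zero (hp5 : 5 ≤ p) :
    (hasseInvariant p (X 0) (X 1) : MvPolynomial (Fin 2) K) ≠ 0 := fun h ↦ by
  have h3 : (3 : K) ≠ 0 := natCast_ne_zero_of_lt K (p := p) three_pos (by lia)
  refine hasseInvariant_ne_zero_of_singular hp5 (a := (-3 : K)) (b := 2) (by norm_num)
    (neg_ne_zero.mpr h3) ?_
  simpa [map_hasseInvariant] using congrArg (eval ![-3, 2]) h

lemma not_dvd_discriminant_of_dvd_hasseInvariant (hp5 : 5 ≤ p) {q : MvPolynomial (Fin 2) K}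
    (hq : Prime q) (hdvd : q ∣ hasseInvariant p (X 0) (X 1)) :
    ¬ q ∣ 4 * X 0 ^ 3 + 27 * X 1 ^ 2 := fun hdisc ↦ by
  have : (Ideal.span {q}).IsPrime := (Ideal.span_singleton_prime hq.ne_zero).mpr hq
  let κ := (Ideal.span {q}).ResidueField
  let φ : MvPolynomial (Fin 2) K →+* κ := algebraMap _ κ
  have hφ : ∀ f, φ f = 0 ↔ q ∣ f := fun f ↦ by
    rw [Ideal.algebraMap_residueField_eq_zero, Ideal.mem_span_singleton]
  have : CharP κ p := charP_of_injective_ringHom (φ.comp C).injective p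
  have hsing : 4 * φ (X 0) ^ 3 + 27 * φ (X 1) ^ 2 = 0 := by
    simpa only [map_add, map_mul, map_pow, map_ofNat] using (hφ _).mpr hdisc
  have hA : φ (X 0) = 0 := by
    by_contra hA
    refine hasseInvariant_ne_zero_of_singular hp5 hsing hA ?_
    rwa [← map_hasseInvariant, hφ]
  have hB : φ (X 1) = 0 := by
    have h3 : (3 : κ) ≠ 0 := natCast_ne_zero_of_lt κ (p := p) three_pos (by lia)
    have : 3 ^ 3 * φ (X 1) ^ 2 = 0 := by
      rw [hA] at hsing; linear_combination hsing
    simpa [h3] using this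
  have hassoc : Associated q (X 0) := hq.associated_of_dvd X_prime ((hφ _).mp hA)
  have hX : (X 0 : MvPolynomial (Fin 2) K) ∣ X 1 := hassoc.symm.dvd.trans ((hφ _).mp hB)
  simp [X_dvd_X] at hX

lemma dvd_discriminant_or_forall_dvd_pderiv (hp5 : 5 ≤ p) {q : MvPolynomial (Fin 2) K}
    (hq : Prime q) (hsq : q * q ∣ hasseInvariant p (X 0) (X 1)) :
    q ∣ 4 * (4 * X 0 ^ 3 + 27 * X 1 ^ 2) ∨ ∀ i, q ∣ pderiv i q := by
  have hc₀ := hasseInvariant_X_ne_zero (K := K) p hp5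
  have hfin := FiniteMultiplicity.of_prime_left hq hc₀
  have hmul : ∀ e ≤ multiplicity q (hasseInvariant p (X 0) (X 1)), 0 < e →
      ¬ q ∣ (e : MvPolynomial (Fin 2) K) := fun e he he₀ ↦ by
    have := multiplicity_le_totalDegree hq hc₀
    have := totalDegree_hasseInvariant_X_le K p
    exact not_dvd_natCast_of_lt p hq.not_isUnit he₀ (by lia)
  obtain ⟨n, rfl⟩ : ∃ n, p = 2 * n + 5 := by
    have := (CharP.char_prime_of_ne_zero K (p := p) (by lia)).eq_two_or_odd
    exact ⟨(p - 5) / 2, by lia⟩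
  rw [or_iff_not_imp_left, Fin.forall_fin_two]
  intro hdisc
  exact ⟨(dvd_or_dvd_derivation_of_ode _ hq hfin hmul hsq
      (hasseInvariant_ode_left (pderiv 0) n (by simp) (by simp))).resolve_left hdisc,
    (dvd_or_dvd_derivation_of_ode _ hq hfin hmul hsq
      (hasseInvariant_ode_right (pderiv 1) n (by simp) (by simp))).resolve_left hdisc⟩

theorem stmt14_general (hp5 : 5 ≤ p) :
    Squarefree (hasseInvariant p (X 0) (X 1) : MvPolynomial (Fin 2) K) := by
  have hc₀ := hasseInvariant_X_ne_zero (K := K) p hp5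
  rw [squarefree_iff_irreducible_sq_not_dvd_of_ne_zero hc₀]
  intro q hirr hsq
  have hq : Prime q := hirr.prime
  have hdvd : q ∣ hasseInvariant p (X 0) (X 1) := (dvd_mul_right q q).trans hsq
  have hdeg : totalDegree q < p := by
    have := totalDegree_le_of_dvd_of_isDomain hdvd hc₀
    have := totalDegree_hasseInvariant_X_le K p
    lia
  have h4 : ¬ q ∣ 4 := not_dvd_natCast_of_lt p hq.not_isUnit four_pos (by lia)
  rcases dvd_discriminant_or_forall_dvd_pderiv p hp5 hq hsq with hdisc | hpderiv
  · exact not_dvd_discriminant_of_dvd_hasseInvariant p hp5 hq hdvd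
      ((hq.dvd_or_dvd hdisc).resolve_left h4)
  · exact hq.not_isUnit (isUnit_of_forall_dvd_pderiv p hq.ne_zero hdeg hpderiv)

end Generic

/-- The coefficient `c_{A,B}` of `x^(p-1)` in `(x³ + Ax + B)^((p-1)/2)` is squarefree over
the algebraic closure of `F_p`. -/
theorem stmt14 (p : ℕ) [hp : Fact p.Prime] (hp5 : 5 ≤ p)
    (c : MvPolynomial (Fin 2) (ZMod p))
    (hc : c = (Polynomial.coeff
      ((Polynomial.X ^ 3 + Polynomial.C (MvPolynomial.X 0) * Polynomial.X +
          Polynomial.C (MvPolynomial.X 1) :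
            Polynomial (MvPolynomial (Fin 2) (ZMod p))) ^ ((p - 1) / 2))
      (p - 1))) :
    Squarefree (MvPolynomial.map
      (algebraMap (ZMod p) (AlgebraicClosure (ZMod p))) c) := by
  rw [hc]
  exact map_hasseInvariant_X (algebraMap (ZMod p) (AlgebraicClosure (ZMod p))) p ▸
    stmt14_general p hp5
end
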